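/- Let G be a semisimple real Lie algebra endowed with a 2-cocycle ω whose radical L = { x : ω(x,·)=0 } has dimension l. Then writing ω(x,y) = K(X,[x,y]) for some X ∈ G (using Whitehead's lemma and nondegeneracy of the Killing form K), the centralizer of X in G has dimension l; in particular the rank of G is at most l. -/

import Mathlib

/-!
Invariance of the Killing form `K` gives `ω(x, y) = K(X, ⁅x, y⁆) = K(⁅X, x⁆, y)`. Since a semisimple
Lie algebra in characteristic zero has nondegenerate Killing form (Cartan's criterion), the radical
of `ω` is the kernel of `ad X`, that is, the centralizer of `X`.

For the rank, recall that Mathlib's `LieAlgebra.rank` is the least dimension of the generalized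
`0`-eigenspace (the Engel subalgebra) of an `ad y`, attained at the regular elements. The inequality
`dim ker (ad X) ≤ dim engel X` therefore goes the wrong way, and the bound
`rank ≤ dim ker (ad X)` needs a genericity argument on a line through `X` and a regular element `Y`:

* along `t ↦ X + t(Y - X)`, the rank of `ad` is at least the rank of `ad X` off the zeros
  of a polynomial not vanishing at `0` (`exists_polynomial_finrank_ker_le`), and regularity holds
  off the zeros of a polynomial not vanishing at `1` (`exists_polynomial_isRegular`), so some regular
  `y` on the line satisfies `dim ker (ad y) ≤ dim ker (ad X)`;
* the Engel subalgebra of a regular `y` is a Cartan subalgebra, hence abelian as the Killing form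
  is nondegenerate; it contains `y`, so it lies in `ker (ad y)`, and its dimension is the rank
  (`rank_le_finrank_ker_ad_of_isRegular`).
-/

open Module Polynomial

/-- Lower semicontinuity of the rank along the line `f + t g`, in polynomial form. -/
lemma exists_polynomial_finrank_ker_le {k V : Type*} [Field k] [AddCommGroup V] [Module k V]
    [FiniteDimensional k V] (f g : V →ₗ[k] V) :
    ∃ q : k[X], q.eval 0 ≠ 0 ∧ ∀ t : k, q.eval t ≠ 0 →
      finrank k (LinearMap.ker (f + t • g)) ≤ finrank k (LinearMap.ker f) := by
  obtain ⟨C, hC⟩ := Submodule.exists_isCompl (LinearMap.ker f)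
  have hinj : LinearMap.ker (f ∘ₗ C.subtype) = ⊥ := by
    rw [LinearMap.ker_eq_bot']
    intro c hc
    have h : (c : V) ∈ LinearMap.ker f ⊓ C := ⟨by simpa using hc, c.2⟩
    rw [hC.inf_eq_bot] at h
    exact Subtype.ext (by simpa using h)
  obtain ⟨P, hP⟩ := LinearMap.exists_leftInverse_of_injective _ hinj
  let b := finBasis k C
  let N : C →ₗ[k] C := P ∘ₗ g ∘ₗ C.subtype
  -- `q` evaluates at `t` to the determinant of `P ∘ (f + t g)` on the complement `C` of `ker f`.
  refine ⟨(LinearMap.toMatrix b b (-N)).charpolyRev, by simp, fun t ht ↦ ?_⟩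
  have hdet : (LinearMap.toMatrix b b (-N)).charpolyRev.eval t =
      LinearMap.det (P ∘ₗ (f + t • g) ∘ₗ C.subtype) := by
    have hsum : P ∘ₗ (f + t • g) ∘ₗ C.subtype = 1 - t • (-N) := by
      rw [LinearMap.add_comp, LinearMap.comp_add, hP]
      simp only [N, LinearMap.smul_comp, LinearMap.comp_smul, smul_neg, sub_neg_eq_add]
      rfl
    rw [hsum, ← LinearMap.det_toMatrix b, map_sub, map_smul, LinearMap.toMatrix_one,
      Matrix.charpolyRev, ← coe_evalRingHom, RingHom.map_det]
    congr 1
    ext i j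
    rcases eq_or_ne i j with hij | hij <;> simp [hij, mul_comm t]
  rw [hdet] at ht
  have hdisj : Disjoint (LinearMap.ker (f + t • g)) C := by
    rw [Submodule.disjoint_def]
    intro c hc hcC
    have hker : LinearMap.ker (P ∘ₗ (f + t • g) ∘ₗ C.subtype) = ⊥ := by
      by_contra h
      exact ht (LinearMap.det_eq_zero_iff_ker_ne_bot.mpr h)
    have h := LinearMap.ker_eq_bot'.mp hker ⟨c, hcC⟩ (by
      simp only [LinearMap.comp_apply, Submodule.subtype_apply]
      rw [LinearMap.mem_ker.mp hc, map_zero])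
    exact congrArg Subtype.val h
  have h₁ := Submodule.finrank_add_finrank_le_of_disjoint hdisj
  have h₂ := Submodule.finrank_add_eq_of_isCompl hC
  omega

lemma exists_polynomial_isRegular {k L : Type*} [Field k] [LieRing L] [LieAlgebra k L]
    [FiniteDimensional k L] (x y : L) :
    ∃ p : k[X], ∀ t : k, p.eval t ≠ 0 ↔ LieAlgebra.IsRegular k (x + t • y) := by
  classical
  let : LieRing (End k L) := LieRing.ofAssociativeRing
  let b := finBasis k L
  refine ⟨MvPolynomial.aeval (fun i ↦ C (b.repr x i) + X * C (b.repr y i))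
    ((LinearMap.polyCharpoly (LieAlgebra.ad k L).toLinearMap b).coeff (LieAlgebra.rank k L)),
    fun t ↦ ?_⟩
  rw [LieAlgebra.isRegular_iff_coeff_polyCharpoly_rank_ne_zero k b]
  have hb : (fun i ↦ b.repr x i + t * b.repr y i) = b.repr (x + t • y) := by
    ext i; simp
  rw [← coe_aeval_eq_eval, ← AlgHom.comp_apply, MvPolynomial.comp_aeval]
  simp only [map_add, map_mul, aeval_C, Algebra.algebraMap_self, RingHom.id_apply, aeval_X]
  rw [← map_add, ← hb, MvPolynomial.aeval_eq_eval]

/-- The Engel subalgebra of a regular element is minimal among Engel subalgebras of its elements,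
hence nilpotent by Engel's theorem. -/
lemma isCartanSubalgebra_engel_of_isRegular {k L : Type*} [Field k] [Infinite k] [LieRing L]
    [LieAlgebra k L] [FiniteDimensional k L] {x : L} (hx : LieAlgebra.IsRegular k x) :
    (LieSubalgebra.engel k x).IsCartanSubalgebra := by
  refine ⟨?_, LieSubalgebra.normalizer_engel _ _⟩
  apply LieSubalgebra.isNilpotent_of_forall_le_engel
  intro y hy
  have hcard : (finrank k L : Cardinal) ≤ Cardinal.mk k :=
    Cardinal.natCast_le_aleph0.trans (Cardinal.infinite_iff.mp ‹Infinite k›)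
  set Ex : {LieSubalgebra.engel k z | z ∈ LieSubalgebra.engel k x} :=
    ⟨LieSubalgebra.engel k x, x, LieSubalgebra.self_mem_engel _ _, rfl⟩
  suffices IsBot Ex from @this ⟨LieSubalgebra.engel k y, y, hy, rfl⟩
  apply LieAlgebra.engel_isBot_of_isMin hcard (LieSubalgebra.engel k x) Ex le_rfl
  rintro ⟨_, y, hy, rfl⟩ hyx
  suffices finrank k (LieSubalgebra.engel k x) ≤ finrank k (LieSubalgebra.engel k y) by
    suffices LieSubalgebra.engel k y = LieSubalgebra.engel k x from this.ge
    apply LieSubalgebra.toSubmodule_injective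
    exact Submodule.eq_of_le_of_finrank_le hyx this
  rw [(LieAlgebra.isRegular_iff_finrank_engel_eq_rank k x).mp hx]
  apply LieAlgebra.rank_le_finrank_engel

lemma rank_le_finrank_ker_ad_of_isRegular {k L : Type*} [Field k] [Infinite k] [LieRing L]
    [LieAlgebra k L] [FiniteDimensional k L] [LieAlgebra.IsKilling k L] {y : L}
    (hy : LieAlgebra.IsRegular k y) :
    LieAlgebra.rank k L ≤ finrank k (LinearMap.ker (LieAlgebra.ad k L y : L →ₗ[k] L)) := by
  have := isCartanSubalgebra_engel_of_isRegular hy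
  have hab : IsLieAbelian (LieSubalgebra.engel k y) := inferInstance
  rw [← (LieAlgebra.isRegular_iff_finrank_engel_eq_rank k y).mp hy]
  refine Submodule.finrank_mono (s := (LieSubalgebra.engel k y).toSubmodule) fun z hz ↦ ?_
  have h := hab.trivial ⟨y, LieSubalgebra.self_mem_engel k y⟩ ⟨z, hz⟩
  simpa using congrArg Subtype.val h

theorem rank_le_finrank_ker_ad {k L : Type*} [Field k] [Infinite k] [LieRing L]
    [LieAlgebra k L] [FiniteDimensional k L] [LieAlgebra.IsKilling k L] (x : L) :
    LieAlgebra.rank k L ≤ finrank k (LinearMap.ker (LieAlgebra.ad k L x : L →ₗ[k] L)) := by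
  obtain ⟨y, hy⟩ := LieAlgebra.exists_isRegular k L
  obtain ⟨p, hp⟩ := exists_polynomial_isRegular (k := k) x (y - x)
  obtain ⟨q, hq0, hq⟩ := exists_polynomial_finrank_ker_le (k := k)
    (LieAlgebra.ad k L x : L →ₗ[k] L) (LieAlgebra.ad k L (y - x) : L →ₗ[k] L)
  have hp1 : p.eval 1 ≠ 0 := (hp 1).mpr (by simpa using hy)
  have hpq : p * q ≠ 0 := by
    refine mul_ne_zero ?_ ?_ <;> rintro rfl <;> simp_all
  obtain ⟨t, ht⟩ : ∃ t : k, (p * q).eval t ≠ 0 := by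
    by_contra! h
    exact hpq (Polynomial.funext (by simpa using h))
  rw [eval_mul, mul_ne_zero_iff] at ht
  have h := hq t ht.2
  rw [← map_smul, ← map_add] at h
  exact (rank_le_finrank_ker_ad_of_isRegular ((hp t).mp ht.1)).trans h


/-- If the radical of the 2-cocycle ω(x,y) = K(X,[x,y]) on a semisimple
real Lie algebra has dimension l, then the centralizer of X has dimension l, and the
rank of the Lie algebra is at most l. -/
theorem stmt10 {L : Type*} [LieRing L] [LieAlgebra ℝ L] [FiniteDimensional ℝ L]
    [LieAlgebra.IsSemisimple ℝ L]
    (ω : L →ₗ[ℝ] L →ₗ[ℝ] ℝ)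
    (hanti : ∀ x y : L, ω x y = - ω y x)
    (hcocycle : ∀ x y z : L, ω ⁅x, y⁆ z + ω ⁅z, x⁆ y + ω ⁅y, z⁆ x = 0)
    (l : ℕ)
    (hl : Module.finrank ℝ (LinearMap.ker ω) = l)
    (X : L)
    (hX : ∀ x y : L, ω x y = killingForm ℝ L X ⁅x, y⁆) :
    Module.finrank ℝ (LinearMap.ker ((LieAlgebra.ad ℝ L X : L →ₗ[ℝ] L))) = l ∧
      LieAlgebra.rank ℝ L ≤ l := by
  have hker : LinearMap.ker ω = LinearMap.ker (LieAlgebra.ad ℝ L X : L →ₗ[ℝ] L) := by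
    ext x
    have hω : ω x = killingForm ℝ L ⁅X, x⁆ := by
      ext y
      rw [hX, killingForm, LieModule.traceForm_apply_lie_apply]
    have hK := LinearMap.ker_eq_bot.mp (LieAlgebra.IsKilling.ker_killingForm_eq_bot ℝ L)
    rw [LinearMap.mem_ker, LinearMap.mem_ker, hω, LieAlgebra.ad_apply]
    exact map_eq_zero_iff _ hK
  rw [← hl, hker]
  exact ⟨rfl, rank_le_finrank_ker_ad X⟩
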